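/- Let w be a smooth function on ℝ^{n+1}, homogeneous of degree μ, satisfying div(y^b ∇w) = 0 in {y > 0} and symmetric in y (w(x,y) = w(x,−y)). If the trace w(·, 0) vanishes identically on ℝⁿ and w is a polynomial, then w ≡ 0 on ℝ^{n+1}. -/

import Mathlib

open MeasureTheory Real Set

noncomputable section

abbrev Eu (n : ℕ) := EuclideanSpace ℝ (Fin (n + 1))

def yc {n : ℕ} (X : Eu n) : ℝ := X (Fin.last n)

def wgt {n : ℕ} (b : ℝ) (X : Eu n) : ℝ := yc X ^ b

/-- Divergence of a vector field. -/
def dvg {n : ℕ} (V : Eu n → Eu n) (X : Eu n) : ℝ :=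
  ∑ i : Fin (n + 1), fderiv ℝ V X (EuclideanSpace.single i 1) i

/-- Reflection across the hyperplane {y = 0}. -/
def reflectY {n : ℕ} (X : Eu n) : Eu n :=
  X - (2 * yc X) • EuclideanSpace.single (Fin.last n) 1

/-!
Away from `{y = 0}` the equation `div (y ^ b ∇w) = 0` reads `y Δw + b ∂_y w = 0`, which for a
polynomial `w` is an identity of polynomials. Expanding `w = ∑ y ^ k w_k(x)` and comparing
coefficients of `y ^ (k + 1)` gives `(k + 2) (k + 1 + b) w_{k+2} + Δ_x w_k = 0`. The trace condition
gives `w_0 = 0`, evenness kills every odd `w_k`, and the recursion propagates `w_0 = 0` to all even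
`k`, because `k + 1 + b` vanishes for an even `k` only when `b` is a negative odd integer.
-/

section Polynomial

open MvPolynomial

variable {σ R : Type*}

section Scaling

variable [DecidableEq σ] [CommSemiring R]

/-- The substitution `X i ↦ c * X i` that fixes the other variables. The factor `c = 0` restricts a
polynomial to a coordinate hyperplane and `c = -1` reflects it across that hyperplane. -/
def scaleVar (i : σ) (c : R) : MvPolynomial σ R →ₐ[R] MvPolynomial σ R :=
  aeval (Function.update X i (C c * X i))

lemma eval_scaleVar (i : σ) (c : R) (P : MvPolynomial σ R) (x : σ → R) :
    eval x (scaleVar i c P) = eval (Function.update x i (c * x i)) P := by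
  have hcomp : (aeval x).comp (scaleVar i c) = aeval (Function.update x i (c * x i)) := by
    ext j
    rcases eq_or_ne j i with rfl | hj <;> simp [scaleVar, *]
  simpa only [AlgHom.comp_apply, aeval_eq_eval, RingHom.coe_coe] using DFunLike.congr_fun hcomp P

lemma coeff_scaleVar (i : σ) (c : R) (P : MvPolynomial σ R) (m : σ →₀ ℕ) :
    coeff m (scaleVar i c P) = c ^ m i * coeff m P := by
  induction P using MvPolynomial.induction_on generalizing m with
  | C a =>
    rw [← algebraMap_eq, AlgHom.commutes, algebraMap_eq, coeff_C]
    split_ifs with hm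
    · simp [← hm]
    · simp
  | add P Q hP hQ => simp only [map_add, coeff_add, hP, hQ, mul_add]
  | mul_X P j hP =>
    rw [map_mul, coeff_mul_X']
    rcases eq_or_ne j i with rfl | hj
    · have hX : scaleVar j c (X j) = C c * X j := by simp [scaleVar]
      rw [hX, mul_left_comm, coeff_C_mul, coeff_mul_X']
      split_ifs with hm
      · have hmj : m j = (m - Finsupp.single j 1 : σ →₀ ℕ) j + 1 := by
          have hpos := Finsupp.mem_support_iff.mp hm
          simp only [Finsupp.tsub_apply, Finsupp.single_eq_same]
          omega
        rw [hP, hmj, pow_succ']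
        ring
      · simp
    · have hX : scaleVar i c (X j) = X j := by simp [scaleVar, hj]
      rw [hX, coeff_mul_X', hP]
      split_ifs <;> simp [hj]

end Scaling

section ScalingDomain

variable [DecidableEq σ] [CommRing R] [IsDomain R] [Infinite R] {i : σ} {P : MvPolynomial σ R}

lemma pow_mul_coeff_eq_coeff_of_eval_update {Q : MvPolynomial σ R} {c : R}
    (h : ∀ x : σ → R, eval (Function.update x i (c * x i)) P = eval x Q) (m : σ →₀ ℕ) :
    c ^ m i * coeff m P = coeff m Q := by
  rw [← coeff_scaleVar]
  exact congrArg (coeff m) (MvPolynomial.funext fun x => (eval_scaleVar i c P x).trans (h x))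

lemma coeff_eq_zero_of_eval_update_zero
    (h : ∀ x : σ → R, eval (Function.update x i 0) P = 0) {m : σ →₀ ℕ} (hm : m i = 0) :
    coeff m P = 0 := by
  have hscale := pow_mul_coeff_eq_coeff_of_eval_update (Q := 0) (c := (0 : R)) (by simpa using h) m
  rwa [hm, pow_zero, one_mul, coeff_zero] at hscale

lemma coeff_eq_zero_of_eval_update_neg [NeZero (2 : R)]
    (h : ∀ x : σ → R, eval (Function.update x i (-x i)) P = eval x P) {m : σ →₀ ℕ}
    (hm : Odd (m i)) : coeff m P = 0 := by
  have hneg := pow_mul_coeff_eq_coeff_of_eval_update (c := (-1 : R)) (by simpa using h) m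
  rw [hm.neg_one_pow] at hneg
  have htwo : 2 * coeff m P = 0 := by linear_combination -hneg
  exact (mul_eq_zero.mp htwo).resolve_left two_ne_zero

end ScalingDomain

/-- The operator `x_i Δ + b ∂_i` on polynomials: `x_i ^ (1 - b) div (x_i ^ b ∇ P)`, written without
the singular weight. -/
def weightedLaplacian [Fintype σ] [CommSemiring R] (i : σ) (b : R) (P : MvPolynomial σ R) :
    MvPolynomial σ R :=
  X i * ∑ j, pderiv j (pderiv j P) + C b * pderiv i P

lemma coeff_pderiv_pderiv [CommSemiring R] (i : σ) (P : MvPolynomial σ R) (m : σ →₀ ℕ) :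
    coeff m (pderiv i (pderiv i P)) =
      coeff (m + Finsupp.single i 2) P * ((m i + 2) * (m i + 1)) := by
  rw [coeff_pderiv, coeff_pderiv, add_assoc, ← Finsupp.single_add]
  simp only [Finsupp.add_apply, Finsupp.single_eq_same]
  push_cast
  ring

lemma coeff_weightedLaplacian [Fintype σ] [CommSemiring R] (i : σ) (b : R) (P : MvPolynomial σ R)
    (m : σ →₀ ℕ) :
    coeff (m + Finsupp.single i 1) (weightedLaplacian i b P) =
      ∑ j, coeff (m + Finsupp.single j 2) P * ((m j + 2) * (m j + 1)) +
        b * (coeff (m + Finsupp.single i 2) P * (m i + 2)) := by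
  rw [weightedLaplacian, coeff_add, add_comm m, coeff_X_mul, coeff_sum, coeff_C_mul, coeff_pderiv,
    add_comm _ m, add_assoc, ← Finsupp.single_add]
  simp only [coeff_pderiv_pderiv, Finsupp.add_apply, Finsupp.single_eq_same]
  push_cast
  ring

variable [Fintype σ] [CommRing R] [IsDomain R] [CharZero R] {i : σ} {b : R} {P : MvPolynomial σ R}

lemma coeff_add_single_two_eq_zero (hP : weightedLaplacian i b P = 0) {m : σ →₀ ℕ}
    (hb : b ≠ -(m i + 1)) (hcoeff : ∀ m' : σ →₀ ℕ, m' i = m i → coeff m' P = 0) :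
    coeff (m + Finsupp.single i 2) P = 0 := by
  have htangential (j : σ) (hj : j ≠ i) :
      coeff (m + Finsupp.single j 2) P * ((m j + 2) * (m j + 1)) = 0 := by
    rw [hcoeff _ (by simp [hj.symm]), zero_mul]
  have hrec := coeff_weightedLaplacian i b P m
  rw [hP, coeff_zero, Fintype.sum_eq_single i htangential] at hrec
  have hmul : coeff (m + Finsupp.single i 2) P * ((m i + 2) * (b + (m i + 1))) = 0 := by
    linear_combination -hrec
  have hi : (m i + 2 : R) ≠ 0 := by exact_mod_cast (m i + 1).succ_ne_zero
  exact (mul_eq_zero.mp hmul).resolve_right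
    (mul_ne_zero hi fun h => hb (eq_neg_of_add_eq_zero_left h))

theorem eq_zero_of_weightedLaplacian_eq_zero (hb : ∀ k : ℕ, b ≠ -(2 * k + 1))
    (hP : weightedLaplacian i b P = 0) (hzero : ∀ m : σ →₀ ℕ, m i = 0 → coeff m P = 0)
    (hodd : ∀ m : σ →₀ ℕ, Odd (m i) → coeff m P = 0) : P = 0 := by
  have heven (k : ℕ) : ∀ m : σ →₀ ℕ, m i = 2 * k → coeff m P = 0 := by
    induction k with
    | zero => exact hzero
    | succ k ih =>
      intro m hm
      obtain ⟨m, rfl⟩ : ∃ m', m = m' + Finsupp.single i 2 :=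
        le_iff_exists_add'.mp (Finsupp.single_le_iff.mpr (by omega))
      have hmi : m i = 2 * k := by simpa [mul_add] using hm
      refine coeff_add_single_two_eq_zero hP ?_ fun m' hm' => ih m' (hm'.trans hmi)
      simpa [hmi] using hb k
  ext m
  rcases Nat.even_or_odd' (m i) with ⟨k, hk | hk⟩
  · exact heven k m hk
  · exact hodd m ⟨k, hk⟩

end Polynomial

section Derivatives

open MvPolynomial

lemma hasFDerivAt_eval_mvPolynomial {σ 𝕜 : Type*} [Fintype σ] [NontriviallyNormedField 𝕜]
    (P : MvPolynomial σ 𝕜) (x : σ → 𝕜) :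
    HasFDerivAt (fun y : σ → 𝕜 => eval y P)
      (∑ i, eval x (pderiv i P) • ContinuousLinearMap.proj (R := 𝕜) (φ := fun _ : σ => 𝕜) i) x := by
  classical
  induction P using MvPolynomial.induction_on with
  | C a =>
    simp only [eval_C]
    refine (hasFDerivAt_const a x).congr_fderiv ?_
    ext v
    simp
  | add P Q hP hQ =>
    simp only [map_add]
    refine (hP.fun_add hQ).congr_fderiv ?_
    ext v
    simp [add_mul, Finset.sum_add_distrib]
  | mul_X P j hP =>
    simp only [map_mul, eval_X]
    refine (hP.mul (hasFDerivAt_apply j x)).congr_fderiv ?_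
    ext v
    simp [pderiv_X, Pi.single_apply, add_mul, Finset.sum_add_distrib, Finset.mul_sum, mul_assoc,
      apply_ite]

lemma hasGradientAt_eval_mvPolynomial {σ : Type*} [Fintype σ] (P : MvPolynomial σ ℝ)
    (x : EuclideanSpace ℝ σ) :
    HasGradientAt (fun y : EuclideanSpace ℝ σ => eval y.ofLp P)
      (WithLp.toLp 2 fun i => eval x.ofLp (pderiv i P)) x := by
  refine ((hasFDerivAt_eval_mvPolynomial P x.ofLp).comp x
    (PiLp.hasFDerivAt_ofLp 2 x)).congr_fderiv ?_
  ext v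
  simp [PiLp.inner_apply, mul_comm]

variable {n : ℕ}

lemma dvg_eq_sum_fderiv_apply {V : Eu n → Eu n} {p : Eu n} (hV : DifferentiableAt ℝ V p) :
    dvg V p = ∑ i, fderiv ℝ (fun q => V q i) p (EuclideanSpace.single i 1) := by
  refine Finset.sum_congr rfl fun i _ => ?_
  have hVi := (PiLp.hasFDerivAt_apply (𝕜 := ℝ) 2 (V p) i).comp p hV.hasFDerivAt
  exact (DFunLike.congr_fun hVi.fderiv _).symm

lemma dvg_smul {φ : Eu n → ℝ} {V : Eu n → Eu n} {p : Eu n} (hφ : DifferentiableAt ℝ φ p)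
    (hV : DifferentiableAt ℝ V p) :
    dvg (fun q => φ q • V q) p = φ p * dvg V p + fderiv ℝ φ p (V p) := by
  have hsum : V p = ∑ i, V p i • EuclideanSpace.single i (1 : ℝ) := by
    simpa using ((EuclideanSpace.basisFun (Fin (n + 1)) ℝ).sum_repr (V p)).symm
  conv_rhs => rw [hsum]
  simp only [dvg, fderiv_fun_smul hφ hV, map_sum, map_smul, Finset.mul_sum,
    ← Finset.sum_add_distrib]
  simp [mul_comm]

lemma dvg_eval_mvPolynomial (F : Fin (n + 1) → MvPolynomial (Fin (n + 1)) ℝ) (p : Eu n) :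
    dvg (fun q : Eu n => WithLp.toLp 2 fun i => eval q.ofLp (F i)) p =
      ∑ i, eval p.ofLp (pderiv i (F i)) := by
  have hF (i) := hasGradientAt_eval_mvPolynomial (F i) p
  rw [dvg_eq_sum_fderiv_apply (differentiableAt_euclidean.mpr fun i => (hF i).differentiableAt)]
  refine Finset.sum_congr rfl fun i _ => ?_
  rw [(hF i).hasFDerivAt.fderiv]
  simp [EuclideanSpace.inner_single_right]

lemma hasFDerivAt_wgt (b : ℝ) {p : Eu n} (hp : yc p ≠ 0) :
    HasFDerivAt (wgt b)
      ((b * yc p ^ (b - 1)) • (EuclideanSpace.proj (Fin.last n) : Eu n →L[ℝ] ℝ)) p :=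
  HasFDerivAt.rpow_const (PiLp.hasFDerivAt_apply 2 p (Fin.last n)) (Or.inl hp)

lemma dvg_wgt_smul_gradient_eval (b : ℝ) (P : MvPolynomial (Fin (n + 1)) ℝ) {p : Eu n}
    (hp : yc p ≠ 0) :
    dvg (fun q => wgt b q • gradient (fun x : Eu n => eval x.ofLp P) q) p =
      yc p ^ (b - 1) * eval p.ofLp (weightedLaplacian (Fin.last n) b P) := by
  have hgrad : gradient (fun x : Eu n => eval x.ofLp P) =
      fun q => WithLp.toLp 2 fun i => eval q.ofLp (pderiv i P) :=
    gradient_eq (hasGradientAt_eval_mvPolynomial P)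
  have hdiff : DifferentiableAt ℝ (gradient fun x : Eu n => eval x.ofLp P) p := by
    rw [hgrad]
    exact differentiableAt_euclidean.mpr fun i =>
      (hasGradientAt_eval_mvPolynomial (pderiv i P) p).differentiableAt
  have hwgt := hasFDerivAt_wgt b hp
  have hpow : wgt b p = yc p ^ (b - 1) * yc p := by
    rw [wgt, ← Real.rpow_add_one hp, sub_add_cancel]
  rw [dvg_smul hwgt.differentiableAt hdiff, hwgt.fderiv, hgrad, dvg_eval_mvPolynomial, hpow]
  simp only [weightedLaplacian, map_add, map_mul, map_sum, eval_X, eval_C, yc,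
    _root_.smul_apply, smul_eq_mul, PiLp.proj_apply]
  ring

lemma weightedLaplacian_eq_zero_of_dvg_eq_zero {b : ℝ} {P : MvPolynomial (Fin (n + 1)) ℝ}
    (h : ∀ p : Eu n, 0 < yc p →
      dvg (fun q => wgt b q • gradient (fun x : Eu n => eval x.ofLp P) q) p = 0) :
    weightedLaplacian (Fin.last n) b P = 0 := by
  refine funext_set (fun _ => Ioi (0 : ℝ)) (fun _ => Ioi_infinite 0) fun x hx => ?_
  have hpos : 0 < yc (WithLp.toLp 2 x : Eu n) := hx (Fin.last n) trivial
  have hdvg := h _ hpos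
  rw [dvg_wgt_smul_gradient_eval b P hpos.ne'] at hdvg
  simpa using (mul_eq_zero.mp hdvg).resolve_left (Real.rpow_pos_of_pos hpos _).ne'

end Derivatives

lemma reflectY_toLp {n : ℕ} (x : Fin (n + 1) → ℝ) :
    reflectY (WithLp.toLp 2 x) =
      WithLp.toLp 2 (Function.update x (Fin.last n) (-x (Fin.last n))) := by
  ext j
  rcases eq_or_ne j (Fin.last n) with rfl | hj
  · simp [reflectY, yc]
    ring
  · simp [reflectY, hj]

theorem stmt_14_general {n : ℕ} (b : ℝ) (hb : ∀ k : ℕ, b ≠ -(2 * k + 1)) (w : Eu n → ℝ)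
    (hharm : ∀ X : Eu n, 0 < yc X → dvg (fun Y => wgt b Y • gradient w Y) X = 0)
    (heven : ∀ X : Eu n, w (reflectY X) = w X)
    (hpoly : ∃ P : MvPolynomial (Fin (n + 1)) ℝ, ∀ X : Eu n,
      w X = MvPolynomial.eval (fun i => X i) P)
    (htrace : ∀ X : Eu n, yc X = 0 → w X = 0) :
    ∀ X : Eu n, w X = 0 := by
  obtain ⟨P, hP⟩ := hpoly
  obtain rfl : w = fun X : Eu n => MvPolynomial.eval X.ofLp P := funext hP
  have hzero (x : Fin (n + 1) → ℝ) :
      MvPolynomial.eval (Function.update x (Fin.last n) 0) P = 0 :=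
    htrace (WithLp.toLp 2 (Function.update x (Fin.last n) 0)) (by simp [yc])
  have hneg (x : Fin (n + 1) → ℝ) :
      MvPolynomial.eval (Function.update x (Fin.last n) (-x (Fin.last n))) P =
        MvPolynomial.eval x P := by
    simpa only [reflectY_toLp] using heven (WithLp.toLp 2 x)
  have hP_zero : P = 0 :=
    eq_zero_of_weightedLaplacian_eq_zero hb (weightedLaplacian_eq_zero_of_dvg_eq_zero hharm)
      (fun _ => coeff_eq_zero_of_eval_update_zero hzero)
      (fun _ => coeff_eq_zero_of_eval_update_neg hneg)
  simp [hP_zero]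

/-- A b-harmonic, even-in-y, μ-homogeneous polynomial vanishing on the thin space {y = 0}
vanishes identically. -/
theorem stmt_14 {n : ℕ} (b : ℝ) (hb : b ∈ Set.Ioo (-1 : ℝ) 1) (μ : ℕ)
    (w : Eu n → ℝ) (hw : ContDiff ℝ (⊤ : ℕ∞) w)
    (hhom : ∀ l : ℝ, 0 < l → ∀ X : Eu n, w (l • X) = l ^ μ * w X)
    (hharm : ∀ X : Eu n, 0 < yc X → dvg (fun Y => wgt b Y • gradient w Y) X = 0)
    (heven : ∀ X : Eu n, w (reflectY X) = w X)
    (hpoly : ∃ P : MvPolynomial (Fin (n + 1)) ℝ, ∀ X : Eu n,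
      w X = MvPolynomial.eval (fun i => X i) P)
    (htrace : ∀ X : Eu n, yc X = 0 → w X = 0) :
    ∀ X : Eu n, w X = 0 := by
  have hb_odd (k : ℕ) : b ≠ -(2 * k + 1) := by
    rintro rfl
    linarith [hb.1, k.cast_nonneg (α := ℝ)]
  exact stmt_14_general b hb_odd w hharm heven hpoly htrace
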